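/- Let k, n be positive integers, T a k×k complex matrix, and Φ : M_k → M_n a unital completely positive linear map. Then ω(Φ(T)) ≤ ω(T), where ω denotes the numerical radius. -/

import Mathlib

open scoped ComplexOrder

noncomputable section

/-- The induced map of a linear map `Φ : 𝒜 → Mₙ(ℂ)` on `m × m` matrices over `𝒜`,
with the result flattened to an `(m·n) × (m·n)` complex matrix. -/
def blockMap {𝒜 : Type*} [AddCommMonoid 𝒜] [Module ℂ 𝒜] {n : ℕ}
    (Φ : 𝒜 →ₗ[ℂ] Matrix (Fin n) (Fin n) ℂ) (m : ℕ)
    (A : Matrix (Fin m) (Fin m) 𝒜) : Matrix (Fin m × Fin n) (Fin m × Fin n) ℂ :=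
  Matrix.of fun p q => Φ (A p.1 q.1) p.2 q.2

/-- `Φ : 𝒜 → Mₙ(ℂ)` is completely positive: for every `m`, the induced map on
`m × m` matrices over `𝒜` sends positive elements (those of the form `Bᴴ * B`)
to positive semidefinite matrices. -/
def IsCP {𝒜 : Type*} [NonUnitalRing 𝒜] [StarRing 𝒜] [Module ℂ 𝒜] {n : ℕ}
    (Φ : 𝒜 →ₗ[ℂ] Matrix (Fin n) (Fin n) ℂ) : Prop :=
  ∀ (m : ℕ) (A : Matrix (Fin m) (Fin m) 𝒜),
    (∃ B : Matrix (Fin m) (Fin m) 𝒜, A = B.conjTranspose * B) →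
      (blockMap Φ m A).PosSemidef

/-- The numerical radius of a `k × k` complex matrix:
`ω(T) = sup { |⟨T x, x⟩| : ‖x‖ = 1 }`. -/
def numRad {k : ℕ} (T : Matrix (Fin k) (Fin k) ℂ) : ℝ :=
  sSup {r : ℝ | ∃ x : EuclideanSpace ℂ (Fin k), ‖x‖ = 1 ∧
    r = ‖(inner (𝕜 := ℂ) (Matrix.toEuclideanLin T x) x : ℂ)‖}

namespace Matrix

variable {k : ℕ}

/-- The form `⟨A x, x⟩` is the conjugate of the sesquilinear expression `x* A x`. -/
theorem inner_toEuclideanLin_self (A : Matrix (Fin k) (Fin k) ℂ)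
    (x : EuclideanSpace ℂ (Fin k)) :
    inner ℂ (toEuclideanLin A x) x = star (star x.ofLp ⬝ᵥ A *ᵥ x.ofLp) := by
  rw [EuclideanSpace.inner_eq_star_dotProduct, toLpLin_apply, star_dotProduct, star_star,
    dotProduct_comm]

theorem star_dotProduct_conjTranspose_mulVec (A : Matrix (Fin k) (Fin k) ℂ) (x : Fin k → ℂ) :
    star x ⬝ᵥ Aᴴ *ᵥ x = star (star x ⬝ᵥ A *ᵥ x) := by
  rw [← star_dotProduct, star_mulVec, dotProduct_mulVec]

end Matrix

open Matrix

section

variable {k n : ℕ}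

theorem star_dotProduct_ofLp_self (x : EuclideanSpace ℂ (Fin k)) :
    star x.ofLp ⬝ᵥ x.ofLp = ((‖x‖ ^ 2 : ℝ) : ℂ) := by
  rw [dotProduct_comm, ← EuclideanSpace.inner_eq_star_dotProduct, inner_self_eq_norm_sq_to_K]
  simp

theorem star_dotProduct_smul_one_sub_mulVec (A : Matrix (Fin k) (Fin k) ℂ) (r : ℝ) (c : ℂ)
    (x : EuclideanSpace ℂ (Fin k)) :
    star x.ofLp ⬝ᵥ ((r : ℂ) • (1 : Matrix (Fin k) (Fin k) ℂ) - (c • A + (c • A)ᴴ)) *ᵥ x.ofLp =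
      ((r * ‖x‖ ^ 2 - 2 * (c * (star x.ofLp ⬝ᵥ A *ᵥ x.ofLp)).re : ℝ) : ℂ) := by
  rw [sub_mulVec, add_mulVec, dotProduct_sub, dotProduct_add, star_dotProduct_conjTranspose_mulVec,
    smul_mulVec, smul_mulVec, one_mulVec, dotProduct_smul, dotProduct_smul,
    star_dotProduct_ofLp_self, smul_eq_mul, smul_eq_mul, Complex.ofReal_sub, ← Complex.add_conj,
    Complex.ofReal_mul, starRingEnd_apply]

theorem bddAbove_numRad_set (T : Matrix (Fin k) (Fin k) ℂ) :
    BddAbove {r : ℝ | ∃ x : EuclideanSpace ℂ (Fin k), ‖x‖ = 1 ∧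
      r = ‖(inner (𝕜 := ℂ) (Matrix.toEuclideanLin T x) x : ℂ)‖} := by
  refine ⟨‖LinearMap.toContinuousLinearMap (toEuclideanLin T)‖, ?_⟩
  rintro r ⟨x, hx, rfl⟩
  refine (norm_inner_le_norm _ _).trans ?_
  have h := (LinearMap.toContinuousLinearMap (toEuclideanLin T)).le_opNorm x
  simpa [hx] using h

/-- The numerical radius controls the quadratic form of `T` at every vector. -/
theorem norm_star_dotProduct_mulVec_le (T : Matrix (Fin k) (Fin k) ℂ)
    (x : EuclideanSpace ℂ (Fin k)) :
    ‖star x.ofLp ⬝ᵥ T *ᵥ x.ofLp‖ ≤ numRad T * ‖x‖ ^ 2 := by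
  rcases eq_or_ne x 0 with rfl | hx
  · simp
  have hx0 : 0 < ‖x‖ := norm_pos_iff.2 hx
  have hu : ‖((‖x‖⁻¹ : ℝ) : ℂ) • x‖ = 1 := by
    simp [norm_smul, hx0.ne']
  have h := le_csSup (bddAbove_numRad_set T) ⟨_, hu, rfl⟩
  rw [map_smul, inner_smul_left, inner_smul_right, inner_toEuclideanLin_self, norm_mul, norm_mul,
    norm_star, RCLike.norm_conj, Complex.norm_real, norm_inv, norm_norm] at h
  change _ ≤ numRad T at h
  field_simp at h
  linarith

/-- The matrix `2 ω(T) - (c T + (c T)ᴴ)` is positive semidefinite for unimodular `c`. -/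
theorem posSemidef_two_numRad_sub (T : Matrix (Fin k) (Fin k) ℂ) {c : ℂ} (hc : ‖c‖ = 1) :
    (((2 * numRad T : ℝ) : ℂ) • (1 : Matrix (Fin k) (Fin k) ℂ) -
      (c • T + (c • T)ᴴ)).PosSemidef := by
  refine .of_dotProduct_mulVec_nonneg ?_ fun v => ?_
  · refine IsHermitian.sub ?_ (isHermitian_add_transpose_self _)
    simp [IsHermitian, conjTranspose_smul]
  have h := norm_star_dotProduct_mulVec_le T (WithLp.toLp 2 v)
  rw [show v = (WithLp.toLp 2 v).ofLp from rfl, star_dotProduct_smul_one_sub_mulVec,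
    Complex.zero_le_real]
  have hre := Complex.re_le_norm (c * (star (WithLp.toLp 2 v).ofLp ⬝ᵥ T *ᵥ (WithLp.toLp 2 v).ofLp))
  rw [norm_mul, hc, one_mul] at hre
  linarith

open scoped MatrixOrder in
theorem IsCP.posSemidef_apply {Φ : Matrix (Fin k) (Fin k) ℂ →ₗ[ℂ] Matrix (Fin n) (Fin n) ℂ}
    (hΦ : IsCP Φ) {A : Matrix (Fin k) (Fin k) ℂ} (hA : A.PosSemidef) : (Φ A).PosSemidef := by
  obtain ⟨B, rfl⟩ : ∃ B, A = Bᴴ * B :=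
    CStarAlgebra.nonneg_iff_eq_star_mul_self.mp hA.nonneg
  have h := hΦ 1 (of fun _ _ => Bᴴ * B) ⟨of fun _ _ => B, by
    ext; simp [mul_apply, star_eq_conjTranspose]⟩
  exact h.submatrix fun i => (0, i)

/-- A completely positive map preserves adjoints. -/
theorem IsCP.map_conjTranspose {Φ : Matrix (Fin k) (Fin k) ℂ →ₗ[ℂ] Matrix (Fin n) (Fin n) ℂ}
    (hΦ : IsCP Φ) (A : Matrix (Fin k) (Fin k) ℂ) : Φ Aᴴ = (Φ A)ᴴ := by
  have h := (hΦ 2 _ ⟨!![1, A; 0, 0], rfl⟩).isHermitian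
  ext i j
  have hij := congr_fun₂ h (1, i) (0, j)
  simpa [blockMap, mul_apply, Fin.sum_univ_two, star_eq_conjTranspose] using hij.symm

end

/-- If `Φ : M_k(ℂ) → Mₙ(ℂ)` is unital and completely positive, then
`ω(Φ(T)) ≤ ω(T)` for every `k × k` complex matrix `T`. -/
theorem numRad_apply_le_numRad (k n : ℕ) (hk : 0 < k) (hn : 0 < n)
    (T : Matrix (Fin k) (Fin k) ℂ)
    (Φ : Matrix (Fin k) (Fin k) ℂ →ₗ[ℂ] Matrix (Fin n) (Fin n) ℂ)
    (hΦ1 : Φ 1 = 1) (hΦ : IsCP Φ) :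
    numRad (Φ T) ≤ numRad T := by
  have : NeZero n := ⟨hn.ne'⟩
  refine csSup_le ⟨_, EuclideanSpace.single 0 1, by simp, rfl⟩ ?_
  rintro r ⟨x, hx, rfl⟩
  rw [inner_toEuclideanLin_self, norm_star]
  obtain ⟨c, hc, hcz⟩ := Complex.exists_norm_eq_mul_self (star x.ofLp ⬝ᵥ Φ T *ᵥ x.ofLp)
  have hpos :=
    (hΦ.posSemidef_apply (posSemidef_two_numRad_sub T hc)).dotProduct_mulVec_nonneg x.ofLp
  rw [map_sub, map_add, hΦ.map_conjTranspose, map_smul, map_smul, hΦ1,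
    star_dotProduct_smul_one_sub_mulVec, ← hcz, hx, Complex.zero_le_real, Complex.ofReal_re] at hpos
  linarith
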